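/- For each integer ν ≥ 2, let Ω_il = √(ν(ν−1)), let Ω*_ν be the unique positive solution of Ω²/(ν(ν−1)) = (1 − γ(ν+1, Ω))/γ(ν−1, Ω), and define R̄_ν = (ν/Ω_il − 1) + (ν/Ω_il + 1) Ω_il^{ν−1} e^{−Ω_il}/(ν−1)! and R*_ν = Ω*_ν γ(ν−1, Ω*_ν)/(ν−1) − ν γ(ν+1, Ω*_ν)/Ω*_ν + ν/Ω*_ν − 1. Then lim_{ν→∞} R̄_ν / R*_ν = 1. -/

import Mathlib

open Real Filter Set

/-- Normalized lower incomplete gamma function. -/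
noncomputable def lowerGamma (t u : ℝ) : ℝ :=
  (∫ s in (0:ℝ)..u, s ^ (t - 1) * Real.exp (-s)) / Real.Gamma t

/-!
Let `X` be gamma distributed of shape `ν`. The asymptotic risk of `Ω` is
`E[max (Ω / X) (X / Ω)] - 1`, and `R̄` is its value at `Ω_il`. Replacing the maximum by `Ω / X` on
`X < T` and by `X / Ω` on `X > T` can only decrease it.

* Splitting at a stationary point `Ω*` shows that `Ω*` minimizes the risk, hence `R* ≤ R̄`.
* Splitting at `T = Ω_il` gives, for every `Ω`, a lower bound `r (a x + b / x) - 1` with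
  `r = ν / Ω_il` and `x = Ω / Ω_il`, whereas `R̄ = r (a + b) - 1` and `a + b ≥ 1`. Since
  `a x + b / x ≥ 2 √(a b) ≥ 4 a b / (a + b)`, the loss is at most
  `r (a - b) ^ 2 / (a + b) ≤ r (a - b) ^ 2`.

Here `a - b` is `2 P(X < Ω_il) - 1` up to a multiple of the density at `Ω_il`. Two reflection
arguments place the median of `X` in `[ν - 1, ν]`, an interval which also contains `Ω_il`, so
`a - b` is at most three times the density `d` at the mode `ν - 1`. Hence
`R̄ - 9 r d ^ 2 ≤ R* ≤ R̄`, while `R̄ ≥ r d / e`; as `d` tends to zero, the ratio tends to one.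
-/

open scoped Topology

/-! ### The gamma distribution -/

/-- The density at `u ≥ 0` of the gamma distribution of shape `t` and rate `1`, whose distribution
function is `lowerGamma t`. -/
noncomputable def gammaDensity (t u : ℝ) : ℝ := u ^ (t - 1) * exp (-u) / Gamma t

section GammaDensity

variable {t u v : ℝ}

lemma gammaDensity_pos (ht : 0 < t) (hu : 0 < u) : 0 < gammaDensity t u := by
  have := Gamma_pos_of_pos ht
  unfold gammaDensity
  positivity

lemma gammaDensity_nonneg (ht : 0 < t) (hu : 0 ≤ u) : 0 ≤ gammaDensity t u := by
  have := Gamma_pos_of_pos ht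
  unfold gammaDensity
  positivity

lemma gammaDensity_add_one_zero (ht : 0 < t) : gammaDensity (t + 1) 0 = 0 := by
  simp [gammaDensity, ht.ne']

lemma gammaDensity_natCast {n : ℕ} (hn : 1 ≤ n) (u : ℝ) :
    gammaDensity n u = u ^ (n - 1) * exp (-u) / (n - 1).factorial := by
  obtain ⟨k, rfl⟩ := Nat.exists_eq_add_of_le' hn
  simp [gammaDensity, Gamma_nat_eq_factorial]

lemma gammaDensity_add_one (ht : 0 < t) (hu : 0 < u) :
    gammaDensity (t + 1) u = u / t * gammaDensity t u := by
  have := (Gamma_pos_of_pos ht).ne'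
  rw [gammaDensity, gammaDensity, Gamma_add_one ht.ne', add_sub_cancel_right, rpow_sub_one hu.ne']
  field_simp

lemma gammaDensity_eq_exp (t : ℝ) (hu : 0 < u) :
    gammaDensity t u = exp ((t - 1) * log u - u) / Gamma t := by
  rw [gammaDensity, rpow_def_of_pos hu, ← exp_add, mul_comm (log u), ← sub_eq_add_neg]

lemma gammaDensity_le_exp_mul_iff (ht : 0 < t) (hu : 0 < u) (hv : 0 < v) (δ : ℝ) :
    gammaDensity t u ≤ exp δ * gammaDensity t v ↔
      (t - 1) * log u - u ≤ δ + ((t - 1) * log v - v) := by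
  rw [gammaDensity_eq_exp t hu, gammaDensity_eq_exp t hv, ← mul_div_assoc,
    div_le_div_iff_of_pos_right (Gamma_pos_of_pos ht), ← exp_add, exp_le_exp]

lemma gammaDensity_le_gammaDensity_iff (ht : 0 < t) (hu : 0 < u) (hv : 0 < v) :
    gammaDensity t u ≤ gammaDensity t v ↔ (t - 1) * log u - u ≤ (t - 1) * log v - v := by
  simpa using gammaDensity_le_exp_mul_iff ht hu hv 0

lemma gammaDensity_le_exp_sub_mul (ht : 1 ≤ t) (hu : 0 < u) (huv : u ≤ v) :
    gammaDensity t u ≤ exp (v - u) * gammaDensity t v := by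
  rw [gammaDensity_le_exp_mul_iff (by linarith) hu (hu.trans_le huv)]
  have : (t - 1) * log u ≤ (t - 1) * log v :=
    mul_le_mul_of_nonneg_left (log_le_log hu huv) (by linarith)
  linarith

lemma gammaDensity_le_mode (ht : 1 < t) (hu : 0 < u) :
    gammaDensity t u ≤ gammaDensity t (t - 1) := by
  have hk : 0 < t - 1 := sub_pos.2 ht
  rw [gammaDensity_le_gammaDensity_iff (by linarith) hu hk]
  have h : (t - 1) * (log u - log (t - 1)) ≤ (t - 1) * (u / (t - 1) - 1) := by
    rw [← log_div hu.ne' hk.ne']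
    exact mul_le_mul_of_nonneg_left (log_le_sub_one_of_pos (by positivity)) hk.le
  have e : (t - 1) * (u / (t - 1) - 1) = u - (t - 1) := by field_simp
  linarith

lemma measurable_gammaDensity (t : ℝ) : Measurable (gammaDensity t) := by
  unfold gammaDensity
  fun_prop

lemma continuousAt_gammaDensity (t : ℝ) (hu : 0 < u) : ContinuousAt (gammaDensity t) u :=
  ((continuousAt_rpow_const u (t - 1) (.inl hu.ne')).mul (by fun_prop)).div_const _

lemma intervalIntegrable_gammaDensity (ht : 0 < t) (a b : ℝ) :
    IntervalIntegrable (gammaDensity t) MeasureTheory.volume a b :=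
  ((intervalIntegral.intervalIntegrable_rpow' (by linarith)).mul_continuousOn
    (by fun_prop)).div_const _

lemma hasDerivAt_gammaDensity_add_one (ht : 0 < t) (hu : 0 < u) :
    HasDerivAt (gammaDensity (t + 1)) (gammaDensity t u - gammaDensity (t + 1) u) u := by
  have hΓ := (Gamma_pos_of_pos ht).ne'
  have h := ((hasDerivAt_rpow_const (p := t + 1 - 1) (.inl hu.ne')).mul
    (hasDerivAt_neg u).exp).div_const (Gamma (t + 1))
  refine h.congr_deriv ?_
  rw [gammaDensity, gammaDensity, Gamma_add_one ht.ne', add_sub_cancel_right]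
  field_simp
  ring

end GammaDensity

section LowerGamma

variable {t u : ℝ}

lemma lowerGamma_eq_integral (t u : ℝ) : lowerGamma t u = ∫ s in (0 : ℝ)..u, gammaDensity t s :=
  (intervalIntegral.integral_div _ _).symm

lemma lowerGamma_zero (t : ℝ) : lowerGamma t 0 = 0 := by simp [lowerGamma]

lemma lowerGamma_sub (ht : 0 < t) (a b : ℝ) :
    lowerGamma t b - lowerGamma t a = ∫ s in a..b, gammaDensity t s := by
  rw [lowerGamma_eq_integral, lowerGamma_eq_integral]
  exact intervalIntegral.integral_interval_sub_left (intervalIntegrable_gammaDensity ht _ _)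
    (intervalIntegrable_gammaDensity ht _ _)

lemma continuous_lowerGamma (ht : 0 < t) : Continuous (lowerGamma t) :=
  (intervalIntegral.continuous_primitive (intervalIntegrable_gammaDensity ht) 0).congr
    fun u => (lowerGamma_eq_integral t u).symm

lemma hasDerivAt_lowerGamma (ht : 0 < t) (hu : 0 < u) :
    HasDerivAt (lowerGamma t) (gammaDensity t u) u :=
  (intervalIntegral.integral_hasDerivAt_right (intervalIntegrable_gammaDensity ht 0 u)
    (measurable_gammaDensity t).stronglyMeasurable.stronglyMeasurableAtFilter
    (continuousAt_gammaDensity t hu)).congr_of_eventuallyEq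
      (.of_forall (lowerGamma_eq_integral t))

lemma monotoneOn_lowerGamma (ht : 0 < t) : MonotoneOn (lowerGamma t) (Ici 0) := by
  intro a ha b _ hab
  rw [← sub_nonneg, lowerGamma_sub ht]
  exact intervalIntegral.integral_nonneg hab fun s hs =>
    gammaDensity_nonneg ht (le_trans ha hs.1)

lemma lowerGamma_nonneg (ht : 0 < t) (hu : 0 ≤ u) : 0 ≤ lowerGamma t u := by
  simpa only [lowerGamma_zero] using monotoneOn_lowerGamma ht self_mem_Ici hu hu

lemma lowerGamma_pos (ht : 0 < t) (hu : 0 < u) : 0 < lowerGamma t u := by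
  rw [lowerGamma_eq_integral]
  exact intervalIntegral.intervalIntegral_pos_of_pos_on (intervalIntegrable_gammaDensity ht 0 u)
    (fun s hs => gammaDensity_pos ht hs.1) hu

lemma tendsto_lowerGamma (ht : 0 < t) : Tendsto (lowerGamma t) atTop (𝓝 1) := by
  have h := (MeasureTheory.intervalIntegral_tendsto_integral_Ioi 0 (GammaIntegral_convergent ht)
    tendsto_id).div_const (Gamma t)
  rw [← Gamma_eq_integral ht, div_self (Gamma_pos_of_pos ht).ne'] at h
  refine h.congr fun u => ?_
  simp only [lowerGamma, id, mul_comm (exp _)]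

lemma lowerGamma_le_one (ht : 0 < t) (hu : 0 ≤ u) : lowerGamma t u ≤ 1 := by
  refine ge_of_tendsto (tendsto_lowerGamma ht) ?_
  filter_upwards [eventually_ge_atTop u] with v hv
  exact monotoneOn_lowerGamma ht hu (hu.trans hv) hv

lemma lowerGamma_add_one (ht : 0 < t) (hu : 0 < u) :
    lowerGamma (t + 1) u = lowerGamma t u - gammaDensity (t + 1) u := by
  have hint := intervalIntegrable_gammaDensity ht 0 u
  have hint' := intervalIntegrable_gammaDensity (add_pos ht one_pos) 0 u
  have hcont : ContinuousOn (gammaDensity (t + 1)) (Icc 0 u) := by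
    unfold gammaDensity
    exact ((continuous_id.rpow_const fun _ => .inr (by linarith)).mul
      (by fun_prop)).div_const _ |>.continuousOn
  have h := intervalIntegral.integral_eq_sub_of_hasDerivAt_of_le hu.le hcont
    (fun x hx => hasDerivAt_gammaDensity_add_one ht hx.1) (hint.sub hint')
  rw [intervalIntegral.integral_sub hint hint', gammaDensity_add_one_zero ht,
    ← lowerGamma_eq_integral, ← lowerGamma_eq_integral] at h
  linarith

lemma lowerGamma_sub_one (ht : 1 < t) (hu : 0 < u) :
    lowerGamma (t - 1) u = lowerGamma t u + gammaDensity t u := by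
  have h := lowerGamma_add_one (sub_pos.2 ht) hu
  rw [sub_add_cancel] at h
  linarith

lemma lowerGamma_add_one_le_lowerGamma_sub_one (ht : 1 < t) (hu : 0 < u) :
    lowerGamma (t + 1) u ≤ lowerGamma (t - 1) u := by
  rw [lowerGamma_add_one (by linarith) hu, lowerGamma_sub_one ht hu]
  linarith [gammaDensity_pos (t := t) (by linarith) hu,
    gammaDensity_pos (t := t + 1) (by linarith) hu]

/-! ### Mode and median -/

lemma lowerGamma_sub_le_mul_mode (ht : 1 < t) {a b : ℝ} (ha : 0 < a) (hab : a ≤ b) :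
    lowerGamma t b - lowerGamma t a ≤ (b - a) * gammaDensity t (t - 1) := by
  rw [lowerGamma_sub (by linarith), ← smul_eq_mul, ← intervalIntegral.integral_const]
  exact intervalIntegral.integral_mono_on hab (intervalIntegrable_gammaDensity (by linarith) _ _)
    intervalIntegrable_const fun s hs => gammaDensity_le_mode ht (ha.trans_le hs.1)

/-- In logarithmic form this is `2 y ≤ log ((1 + y) / (1 - y))` for `y = x / (t - 1)`. -/
lemma gammaDensity_mode_sub_le_mode_add {x : ℝ} (hx : 0 ≤ x) (hxt : x < t - 1) :
    gammaDensity t (t - 1 - x) ≤ gammaDensity t (t - 1 + x) := by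
  have hk : 0 < t - 1 := hx.trans_lt hxt
  have hsub : 0 < t - 1 - x := sub_pos.2 hxt
  have hadd : 0 < t - 1 + x := by positivity
  rw [gammaDensity_le_gammaDensity_iff (by linarith) hsub hadd]
  have hlog : 2 * x / (t - 1) ≤ log (t - 1 + x) - log (t - 1 - x) := by
    convert le_log_one_add_of_nonneg (x := 2 * x / (t - 1 - x)) (by positivity) using 1
    · field_simp
      ring
    · rw [← log_div hadd.ne' hsub.ne']
      congr 1
      field_simp
      ring
  rw [div_le_iff₀ hk] at hlog
  linarith

/-- The density is skewed to the right about the mode, so the mass of `[t - 1, 2 (t - 1)]` is at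
least that of `[0, t - 1]`. -/
lemma lowerGamma_mode_le_half (ht : 1 < t) : lowerGamma t (t - 1) ≤ 1 / 2 := by
  have ht0 : 0 < t := by linarith
  have hk : 0 ≤ t - 1 := by linarith
  have hcont := continuous_lowerGamma ht0
  have hmono : MonotoneOn (fun x => lowerGamma t (t - 1 + x) + lowerGamma t (t - 1 - x))
      (Icc 0 (t - 1)) := by
    refine monotoneOn_of_hasDerivWithinAt_nonneg
      (f' := fun x => gammaDensity t (t - 1 + x) - gammaDensity t (t - 1 - x))
      (convex_Icc _ _) (by fun_prop) (fun x hx => ?_) fun x hx => ?_ <;>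
    rw [interior_Icc] at hx
    · have hadd := (hasDerivAt_lowerGamma ht0 (add_pos_of_nonneg_of_pos hk hx.1)).comp_const_add
        (t - 1) x
      have hsub := (hasDerivAt_lowerGamma ht0 (sub_pos.2 hx.2)).comp_const_sub (t - 1) x
      exact ((hadd.add hsub).congr_deriv (sub_eq_add_neg _ _).symm).hasDerivWithinAt
    · exact sub_nonneg.2 (gammaDensity_mode_sub_le_mode_add hx.1.le hx.2)
  have h := hmono (left_mem_Icc.2 hk) (right_mem_Icc.2 hk) hk
  simp only [add_zero, sub_zero, sub_self, lowerGamma_zero] at h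
  linarith [lowerGamma_le_one ht0 (add_nonneg hk hk)]

/-- Up to a factor `t` both sides are densities of `log X`, where `X` has shape `t`, at two points
symmetric about `log t`. In logarithmic form this is `log r ≤ sinh (log r)` for `r = u / t`. -/
lemma gammaDensity_add_one_le_reflect (ht : 0 < t) (hu : t ≤ u) :
    gammaDensity (t + 1) u ≤ gammaDensity (t + 1) (t ^ 2 / u) := by
  have hu0 : 0 < u := ht.trans_le hu
  rw [gammaDensity_le_gammaDensity_iff (by linarith) hu0 (by positivity), add_sub_cancel_right,
    log_div (by positivity) hu0.ne', log_pow]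
  have h := self_le_sinh_iff.2 (log_nonneg ((one_le_div ht).2 hu))
  rw [sinh_log (by positivity), log_div hu0.ne' ht.ne'] at h
  have e : 2 * t * ((u / t - (u / t)⁻¹) / 2) = u - t ^ 2 / u := by field_simp
  have := mul_le_mul_of_nonneg_left h (show 0 ≤ 2 * t by positivity)
  push_cast
  linarith

/-- The law of `log X` is skewed to the left about `log t`, so the mass of `[t, u]` is at most that
of `[t ^ 2 / u, t]`; let `u` tend to infinity. -/
lemma half_le_lowerGamma_self (ht : 0 < t) : 1 / 2 ≤ lowerGamma t t := by
  have hderiv : ∀ u, t ≤ u → HasDerivAt (fun u => lowerGamma t u + lowerGamma t (t ^ 2 / u))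
      (t / u * (gammaDensity (t + 1) u - gammaDensity (t + 1) (t ^ 2 / u))) u := by
    intro u hu
    have hu0 : 0 < u := ht.trans_le hu
    have hinv : HasDerivAt (fun u => t ^ 2 / u) (-(t ^ 2 / u ^ 2)) u :=
      ((hasDerivAt_inv hu0.ne').const_mul (t ^ 2)).congr_deriv (by ring)
    have hreflect := (hasDerivAt_lowerGamma ht (u := t ^ 2 / u) (by positivity)).comp u hinv
    refine ((hasDerivAt_lowerGamma ht hu0).add hreflect).congr_deriv ?_
    rw [gammaDensity_add_one ht hu0, gammaDensity_add_one ht (by positivity)]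
    field_simp
    ring
  have hanti : AntitoneOn (fun u => lowerGamma t u + lowerGamma t (t ^ 2 / u)) (Ici t) :=
    antitoneOn_of_hasDerivWithinAt_nonpos (convex_Ici t)
      (fun u hu => (hderiv u hu).continuousAt.continuousWithinAt)
      (fun u hu => (hderiv u (interior_subset hu)).hasDerivWithinAt) fun u hu => by
        have hu : t ≤ u := interior_subset hu
        exact mul_nonpos_of_nonneg_of_nonpos (div_nonneg ht.le (ht.le.trans hu))
          (sub_nonpos.2 (gammaDensity_add_one_le_reflect ht hu))
  suffices h : 1 ≤ 2 * lowerGamma t t by linarith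
  refine le_of_tendsto (tendsto_lowerGamma ht) ?_
  filter_upwards [eventually_ge_atTop t] with u hu
  have h := hanti self_mem_Ici hu hu
  have e : t ^ 2 / t = t := by field_simp
  simp only [e] at h
  have hreflected : 0 ≤ t ^ 2 / u := div_nonneg (sq_nonneg t) (ht.le.trans hu)
  linarith [lowerGamma_nonneg ht hreflected]

/-- Both `u` and the median lie between the mode `t - 1` and the mean `t`. -/
lemma abs_lowerGamma_sub_half_le (ht : 1 < t) (hu : u ∈ Icc (t - 1) t) :
    |lowerGamma t u - 1 / 2| ≤ gammaDensity t (t - 1) := by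
  have ht0 : 0 < t := by linarith
  have hk : 0 < t - 1 := by linarith
  have hu0 : 0 ≤ u := hk.le.trans hu.1
  have hmedian : 1 / 2 ∈ Icc (lowerGamma t (t - 1)) (lowerGamma t t) :=
    ⟨lowerGamma_mode_le_half ht, half_le_lowerGamma_self ht0⟩
  have hval : lowerGamma t u ∈ Icc (lowerGamma t (t - 1)) (lowerGamma t t) :=
    ⟨monotoneOn_lowerGamma ht0 hk.le hu0 hu.1, monotoneOn_lowerGamma ht0 hu0 ht0.le hu.2⟩
  calc |lowerGamma t u - 1 / 2| ≤ lowerGamma t t - lowerGamma t (t - 1) :=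
        Real.dist_le_of_mem_Icc hval hmedian
    _ ≤ (t - (t - 1)) * gammaDensity t (t - 1) :=
        lowerGamma_sub_le_mul_mode ht hk (sub_le_self t zero_le_one)
    _ = gammaDensity t (t - 1) := by rw [sub_sub_cancel, one_mul]

lemma abs_lowerGamma_sub_one_add_lowerGamma_add_one_sub_one_le (ht : 1 < t)
    (hu : u ∈ Icc (t - 1) t) :
    |lowerGamma (t - 1) u + lowerGamma (t + 1) u - 1| ≤ 3 * gammaDensity t (t - 1) := by
  have ht0 : 0 < t := by linarith
  have hu0 : 0 < u := (sub_pos.2 ht).trans_le hu.1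
  have hmedian := abs_le.1 (abs_lowerGamma_sub_half_le ht hu)
  have hmode := gammaDensity_le_mode ht hu0
  have hg := gammaDensity_pos ht0 hu0
  have hg' : gammaDensity (t + 1) u ≤ gammaDensity t u := by
    rw [gammaDensity_add_one ht0 hu0]
    exact mul_le_of_le_one_left hg.le ((div_le_one ht0).2 hu.2)
  have hg'0 : 0 < gammaDensity (t + 1) u := gammaDensity_pos (by linarith) hu0
  rw [lowerGamma_sub_one ht hu0, lowerGamma_add_one ht0 hu0]
  exact abs_le.2 ⟨by linarith, by linarith⟩

lemma gammaDensity_mode_le_exp_half_mul (ht : 1 < t) (hu : u ∈ Icc (t - 1) (t - 1 + √(t - 1))) :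
    gammaDensity t (t - 1) ≤ exp (1 / 2) * gammaDensity t u := by
  have hk : 0 < t - 1 := by linarith
  have hu0 : 0 < u := hk.trans_le hu.1
  obtain ⟨x, rfl⟩ : ∃ x, u = t - 1 + x := ⟨u - (t - 1), by ring⟩
  have hx : 0 ≤ x := by linarith [hu.1]
  have hx2 : x ^ 2 ≤ t - 1 := (le_sqrt hx hk.le).1 (by linarith [hu.2])
  rw [gammaDensity_le_exp_mul_iff (by linarith) hk hu0]
  have hlog : 2 * x / (x + 2 * (t - 1)) ≤ log (t - 1 + x) - log (t - 1) := by
    convert le_log_one_add_of_nonneg (x := x / (t - 1)) (by positivity) using 1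
    · field_simp
    · rw [← log_div hu0.ne' hk.ne']
      congr 1
      field_simp
  have hquad : x - 1 / 2 ≤ (t - 1) * (2 * x / (x + 2 * (t - 1))) := by
    rw [mul_div_assoc', le_div_iff₀ (by positivity)]
    nlinarith
  linarith [mul_le_mul_of_nonneg_left hlog hk.le]

/-- The density is comparable to its maximum on an interval of length `√(t - 1)`. -/
lemma sqrt_mul_gammaDensity_mode_le (ht : 1 < t) :
    √(t - 1) * gammaDensity t (t - 1) ≤ exp (1 / 2) := by
  have ht0 : 0 < t := by linarith
  have hk : 0 ≤ t - 1 := by linarith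
  have hab : t - 1 ≤ t - 1 + √(t - 1) := le_add_of_nonneg_right (sqrt_nonneg _)
  calc √(t - 1) * gammaDensity t (t - 1)
      = ∫ _ in (t - 1)..(t - 1 + √(t - 1)), gammaDensity t (t - 1) := by
        rw [intervalIntegral.integral_const, add_sub_cancel_left, smul_eq_mul]
    _ ≤ ∫ u in (t - 1)..(t - 1 + √(t - 1)), exp (1 / 2) * gammaDensity t u :=
        intervalIntegral.integral_mono_on hab intervalIntegrable_const
          ((intervalIntegrable_gammaDensity ht0 _ _).const_mul _)
          fun u hu => gammaDensity_mode_le_exp_half_mul ht hu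
    _ = exp (1 / 2) * (lowerGamma t (t - 1 + √(t - 1)) - lowerGamma t (t - 1)) := by
        rw [intervalIntegral.integral_const_mul, lowerGamma_sub ht0]
    _ ≤ exp (1 / 2) * 1 := by
        gcongr
        linarith [lowerGamma_le_one ht0 (hk.trans hab), lowerGamma_nonneg ht0 hk]
    _ = exp (1 / 2) := mul_one _

end LowerGamma

lemma tendsto_gammaDensity_mode : Tendsto (fun t => gammaDensity t (t - 1)) atTop (𝓝 0) := by
  have hsqrt : Tendsto (fun t : ℝ => √(t - 1)) atTop atTop :=
    tendsto_sqrt_atTop.comp (tendsto_atTop_add_const_right atTop (-1) tendsto_id)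
  refine squeeze_zero' ?_ ?_ (hsqrt.const_div_atTop (exp (1 / 2))) <;>
  filter_upwards [eventually_gt_atTop 1] with t ht
  · exact gammaDensity_nonneg (by linarith) (by linarith)
  · rw [le_div_iff₀' (sqrt_pos.2 (sub_pos.2 ht))]
    exact sqrt_mul_gammaDensity_mode_le ht

/-! ### The asymptotic risk -/

/-- `E[Ω / X; X < T] + E[X / Ω; X > T] - 1` for `X` gamma distributed of shape `ν`, expressed
through the distribution functions of shapes `ν - 1` and `ν + 1`. It serves as a lower bound for the
asymptotic risk of `Ω` in which the threshold `T` can be chosen freely. -/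
noncomputable def splitRisk (ν Ω T : ℝ) : ℝ :=
  Ω * lowerGamma (ν - 1) T / (ν - 1) - ν * lowerGamma (ν + 1) T / Ω + ν / Ω - 1

/-- The asymptotic risk of `Ω / (N + d)` under the normalized inverse-linear loss, which is
`E[max (Ω / X) (X / Ω)] - 1` for `X` gamma distributed of shape `ν`. -/
noncomputable def asymptoticRisk (ν Ω : ℝ) : ℝ := splitRisk ν Ω Ω

section Risk

variable {ν Ω T : ℝ}

lemma hasDerivAt_splitRisk (hν : 1 < ν) (hΩ : 0 < Ω) (hT : 0 < T) :
    HasDerivAt (splitRisk ν Ω) ((Ω / T - T / Ω) * gammaDensity ν T) T := by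
  have hν0 : 0 < ν := by linarith
  have hν1 : 0 < ν - 1 := sub_pos.2 hν
  have h := ((((hasDerivAt_lowerGamma hν1 hT).const_mul Ω).div_const (ν - 1)).sub
    (((hasDerivAt_lowerGamma (t := ν + 1) (by linarith) hT).const_mul ν).div_const Ω)).add_const
      (ν / Ω) |>.sub_const 1
  refine h.congr_deriv ?_
  have hdown := gammaDensity_add_one hν1 hT
  rw [sub_add_cancel] at hdown
  rw [gammaDensity_add_one hν0 hT, hdown]
  field_simp

/-- `T ↦ splitRisk ν Ω T` increases up to `Ω` and decreases afterwards. -/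
lemma splitRisk_le_asymptoticRisk (hν : 1 < ν) (hΩ : 0 < Ω) (hT : 0 < T) :
    splitRisk ν Ω T ≤ asymptoticRisk ν Ω := by
  have hderiv : ∀ x, 0 < x → HasDerivAt (splitRisk ν Ω) ((Ω / x - x / Ω) * gammaDensity ν x) x :=
    fun x hx => hasDerivAt_splitRisk hν hΩ hx
  have hdensity : ∀ x, 0 < x → 0 ≤ gammaDensity ν x :=
    fun x hx => (gammaDensity_pos (by linarith) hx).le
  rcases le_total T Ω with hTΩ | hΩT
  · refine monotoneOn_of_hasDerivWithinAt_nonneg (convex_Ioc 0 Ω)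
      (fun x hx => (hderiv x hx.1).continuousAt.continuousWithinAt)
      (fun x hx => (hderiv x (interior_subset hx).1).hasDerivWithinAt)
      (fun x hx => ?_) ⟨hT, hTΩ⟩ ⟨hΩ, le_rfl⟩ hTΩ
    obtain ⟨hx0, hxΩ⟩ := interior_subset hx
    refine mul_nonneg (sub_nonneg.2 ?_) (hdensity x hx0)
    exact ((div_le_one hΩ).2 hxΩ).trans ((one_le_div hx0).2 hxΩ)
  · refine antitoneOn_of_hasDerivWithinAt_nonpos (convex_Ici Ω)
      (fun x hx => (hderiv x (hΩ.trans_le hx)).continuousAt.continuousWithinAt)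
      (fun x hx => (hderiv x (hΩ.trans_le (interior_subset hx))).hasDerivWithinAt)
      (fun x hx => ?_) self_mem_Ici hΩT hΩT
    have hΩx : Ω ≤ x := interior_subset hx
    have hx0 : 0 < x := hΩ.trans_le hΩx
    refine mul_nonpos_of_nonpos_of_nonneg (sub_nonpos.2 ?_) (hdensity x hx0)
    exact ((div_le_one hx0).2 hΩx).trans ((one_le_div hΩ).2 hΩx)

/-- By stationarity the risk of `T` split at `Ω` is a multiple of `T + Ω ^ 2 / T`, minus one. -/
lemma isMinOn_asymptoticRisk_of_stationary (hν : 1 < ν) (hΩ : 0 < Ω)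
    (hst : Ω ^ 2 / (ν * (ν - 1)) = (1 - lowerGamma (ν + 1) Ω) / lowerGamma (ν - 1) Ω) :
    IsMinOn (asymptoticRisk ν) (Ioi 0) Ω := by
  intro T (hT : 0 < T)
  refine le_trans ?_ (splitRisk_le_asymptoticRisk hν hT hΩ)
  have hν0 : 0 < ν := by linarith
  have hν1 : 0 < ν - 1 := sub_pos.2 hν
  have hγ : 0 < lowerGamma (ν - 1) Ω := lowerGamma_pos hν1 hΩ
  have hsplit : ∀ S, 0 < S →
      splitRisk ν S Ω = lowerGamma (ν - 1) Ω / (ν - 1) * (S + Ω ^ 2 / S) - 1 := by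
    intro S hS
    have : ν * (1 - lowerGamma (ν + 1) Ω) = Ω ^ 2 * lowerGamma (ν - 1) Ω / (ν - 1) := by
      rw [div_eq_div_iff (by positivity) hγ.ne'] at hst
      rw [eq_div_iff hν1.ne', hst]
      ring
    rw [splitRisk]
    linear_combination this / S
  have hamgm : Ω + Ω ^ 2 / Ω ≤ T + Ω ^ 2 / T := by
    rw [← sub_nonneg]
    have e : T + Ω ^ 2 / T - (Ω + Ω ^ 2 / Ω) = (T - Ω) ^ 2 / T := by
      field_simp
      ring
    rw [e]
    positivity
  rw [asymptoticRisk, hsplit Ω hΩ, hsplit T hT]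
  gcongr

end Risk

/-! ### The risk at `√(ν (ν - 1))` -/

/-- The value `Ω_il = √(ν (ν - 1))`, the geometric mean of the mode and the mean of the gamma
distribution of shape `ν`. -/
noncomputable def omegaIL (ν : ℝ) : ℝ := √(ν * (ν - 1))

/-- The supremum risk `R̄_ν` of the estimator `Ω_il / (N + d)`. -/
noncomputable def supRisk (ν : ℝ) : ℝ :=
  (ν / omegaIL ν - 1) + (ν / omegaIL ν + 1) * gammaDensity ν (omegaIL ν)

/-- The left-hand side is `4 a b / (a + b)`. -/
lemma add_sub_sq_div_add_le_mul_add_div {a b x : ℝ} (hab : 0 ≤ a * b) (hadd : 0 < a + b)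
    (hx : 0 < x) : a + b - (a - b) ^ 2 / (a + b) ≤ a * x + b / x := by
  have e : a * x + b / x - (a + b - (a - b) ^ 2 / (a + b)) =
      ((a * x - b) ^ 2 + a * b * (x - 1) ^ 2) / (x * (a + b)) := by
    field_simp
    ring
  rw [← sub_nonneg, e]
  positivity

section OmegaIL

variable {ν Ω : ℝ}

lemma omegaIL_pos (hν : 1 < ν) : 0 < omegaIL ν :=
  sqrt_pos.2 (mul_pos (by linarith) (by linarith))

lemma omegaIL_sq (hν : 1 < ν) : omegaIL ν ^ 2 = ν * (ν - 1) :=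
  sq_sqrt (mul_nonneg (by linarith) (by linarith))

lemma omegaIL_mem_Icc (hν : 1 < ν) : omegaIL ν ∈ Icc (ν - 1) ν :=
  ⟨le_sqrt_of_sq_le (by nlinarith), sqrt_le_iff.2 ⟨by linarith, by nlinarith⟩⟩

lemma one_le_div_omegaIL (hν : 1 < ν) : 1 ≤ ν / omegaIL ν :=
  (one_le_div (omegaIL_pos hν)).2 (omegaIL_mem_Icc hν).2

lemma splitRisk_omegaIL (hν : 1 < ν) (Ω : ℝ) :
    splitRisk ν Ω (omegaIL ν) = ν / omegaIL ν *
      (lowerGamma (ν - 1) (omegaIL ν) * (Ω / omegaIL ν) +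
        (1 - lowerGamma (ν + 1) (omegaIL ν)) / (Ω / omegaIL ν)) - 1 := by
  have hc := omegaIL_pos hν
  have hν1 : 0 < ν - 1 := sub_pos.2 hν
  have hleft : ν / omegaIL ν * (Ω / omegaIL ν) = Ω / (ν - 1) := by
    rw [div_mul_div_comm, ← sq, omegaIL_sq hν]
    field_simp
  have hright : ν / omegaIL ν / (Ω / omegaIL ν) = ν / Ω := by
    field_simp
  rw [splitRisk]
  linear_combination (-lowerGamma (ν - 1) (omegaIL ν)) * hleft -
    (1 - lowerGamma (ν + 1) (omegaIL ν)) * hright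

lemma asymptoticRisk_omegaIL (hν : 1 < ν) : asymptoticRisk ν (omegaIL ν) = supRisk ν := by
  have hc := omegaIL_pos hν
  rw [asymptoticRisk, splitRisk_omegaIL hν, supRisk, div_self hc.ne', lowerGamma_sub_one hν hc,
    lowerGamma_add_one (by linarith) hc, gammaDensity_add_one (by linarith) hc]
  field_simp
  ring

lemma mul_gammaDensity_mode_le_supRisk (hν : 1 < ν) :
    ν / omegaIL ν * gammaDensity ν (ν - 1) ≤ exp 1 * supRisk ν := by
  have hr := one_le_div_omegaIL hν
  have hmem := omegaIL_mem_Icc hν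
  have hg : 0 < gammaDensity ν (omegaIL ν) := gammaDensity_pos (by linarith) (omegaIL_pos hν)
  calc ν / omegaIL ν * gammaDensity ν (ν - 1)
      ≤ ν / omegaIL ν * (exp (omegaIL ν - (ν - 1)) * gammaDensity ν (omegaIL ν)) := by
        gcongr
        exact gammaDensity_le_exp_sub_mul hν.le (sub_pos.2 hν) hmem.1
    _ ≤ ν / omegaIL ν * (exp 1 * gammaDensity ν (omegaIL ν)) := by
        gcongr
        linarith [hmem.2]
    _ = exp 1 * (ν / omegaIL ν * gammaDensity ν (omegaIL ν)) := by ring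
    _ ≤ exp 1 * supRisk ν := by
        gcongr
        rw [supRisk]
        linarith

lemma supRisk_pos (hν : 1 < ν) : 0 < supRisk ν := by
  have hd : 0 < gammaDensity ν (ν - 1) := gammaDensity_pos (by linarith) (by linarith)
  have hr := one_le_div_omegaIL hν
  have hrd : 0 < ν / omegaIL ν * gammaDensity ν (ν - 1) := by positivity
  exact pos_of_mul_pos_right (hrd.trans_le (mul_gammaDensity_mode_le_supRisk hν)) (exp_pos 1).le

lemma supRisk_sub_asymptoticRisk_le (hν : 1 < ν) (hΩ : 0 < Ω) :
    supRisk ν - asymptoticRisk ν Ω ≤ ν / omegaIL ν * (3 * gammaDensity ν (ν - 1)) ^ 2 := by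
  have hc := omegaIL_pos hν
  have hr : 0 ≤ ν / omegaIL ν := zero_le_one.trans (one_le_div_omegaIL hν)
  have hadd := lowerGamma_add_one_le_lowerGamma_sub_one hν hc
  have hsub :=
    abs_lowerGamma_sub_one_add_lowerGamma_add_one_sub_one_le hν (omegaIL_mem_Icc hν)
  have ha : 0 ≤ lowerGamma (ν - 1) (omegaIL ν) := lowerGamma_nonneg (by linarith) hc.le
  have hb : lowerGamma (ν + 1) (omegaIL ν) ≤ 1 := lowerGamma_le_one (by linarith) hc.le
  refine (sub_le_sub_left (splitRisk_le_asymptoticRisk hν hΩ hc) _).trans ?_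
  rw [← asymptoticRisk_omegaIL hν, asymptoticRisk, splitRisk_omegaIL hν, splitRisk_omegaIL hν,
    div_self hc.ne', mul_one, div_one, sub_sub_sub_cancel_right, ← mul_sub]
  refine mul_le_mul_of_nonneg_left ?_ hr
  set a := lowerGamma (ν - 1) (omegaIL ν)
  set b := 1 - lowerGamma (ν + 1) (omegaIL ν)
  have hsum : 1 ≤ a + b := by linarith
  have hdiff : |a - b| ≤ 3 * gammaDensity ν (ν - 1) := by
    rwa [show a - b = a + lowerGamma (ν + 1) (omegaIL ν) - 1 by ring]
  calc a + b - (a * (Ω / omegaIL ν) + b / (Ω / omegaIL ν))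
      ≤ (a - b) ^ 2 / (a + b) := by
        linarith [add_sub_sq_div_add_le_mul_add_div (mul_nonneg ha (sub_nonneg.2 hb))
          (by linarith) (div_pos hΩ hc)]
    _ ≤ (a - b) ^ 2 := div_le_self (sq_nonneg _) hsum
    _ ≤ (3 * gammaDensity ν (ν - 1)) ^ 2 := sq_le_sq' (abs_le.1 hdiff).1 (abs_le.1 hdiff).2

lemma one_sub_le_asymptoticRisk_div_supRisk (hν : 1 < ν) (hΩ : 0 < Ω) :
    1 - 9 * exp 1 * gammaDensity ν (ν - 1) ≤ asymptoticRisk ν Ω / supRisk ν := by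
  have hd : 0 < gammaDensity ν (ν - 1) := gammaDensity_pos (by linarith) (by linarith)
  rw [le_div_iff₀ (supRisk_pos hν)]
  have := mul_le_mul_of_nonneg_left (mul_gammaDensity_mode_le_supRisk hν) hd.le
  linarith [supRisk_sub_asymptoticRisk_le hν hΩ]

end OmegaIL

lemma supRisk_natCast {ν : ℕ} (hν : 1 ≤ ν) :
    supRisk ν = (ν / √(ν * (ν - 1)) - 1) + (ν / √(ν * (ν - 1)) + 1) * √(ν * (ν - 1)) ^ (ν - 1) *
      exp (-√(ν * (ν - 1))) / (ν - 1).factorial := by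
  rw [supRisk, gammaDensity_natCast hν, omegaIL]
  ring

theorem stmt13_general {ι : Type*} {l : Filter ι} {ν Ω : ι → ℝ} (hν : Tendsto ν l atTop)
    (hΩ : ∀ᶠ i in l, 0 < Ω i ∧
      Ω i ^ 2 / (ν i * (ν i - 1)) =
        (1 - lowerGamma (ν i + 1) (Ω i)) / lowerGamma (ν i - 1) (Ω i)) :
    Tendsto (fun i => supRisk (ν i) / asymptoticRisk (ν i) (Ω i)) l (𝓝 1) := by
  have hlower : Tendsto (fun i => 1 - 9 * exp 1 * gammaDensity (ν i) (ν i - 1)) l (𝓝 1) := by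
    simpa using ((tendsto_gammaDensity_mode.comp hν).const_mul (9 * exp 1)).const_sub 1
  have hratio : Tendsto (fun i => asymptoticRisk (ν i) (Ω i) / supRisk (ν i)) l (𝓝 1) := by
    refine tendsto_of_tendsto_of_tendsto_of_le_of_le' hlower tendsto_const_nhds ?_ ?_ <;>
    filter_upwards [hν.eventually_gt_atTop 1, hΩ] with i hν1 ⟨hΩ0, hst⟩
    · exact one_sub_le_asymptoticRisk_div_supRisk hν1 hΩ0
    · refine div_le_one_of_le₀ ?_ (supRisk_pos hν1).le
      rw [← asymptoticRisk_omegaIL hν1]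
      exact isMinOn_asymptoticRisk_of_stationary hν1 hΩ0 hst (omegaIL_pos hν1)
  simpa using hratio.inv₀ one_ne_zero

theorem stmt13 (Ωs : ℕ → ℝ)
    (hΩs : ∀ ν : ℕ, 2 ≤ ν → 0 < Ωs ν ∧
      (Ωs ν) ^ 2 / ((ν : ℝ) * ((ν : ℝ) - 1)) =
        (1 - lowerGamma ((ν : ℝ) + 1) (Ωs ν)) / lowerGamma ((ν : ℝ) - 1) (Ωs ν)) :
    Filter.Tendsto
      (fun ν : ℕ =>
        (((ν : ℝ) / Real.sqrt ((ν : ℝ) * ((ν : ℝ) - 1)) - 1) +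
            ((ν : ℝ) / Real.sqrt ((ν : ℝ) * ((ν : ℝ) - 1)) + 1) *
              (Real.sqrt ((ν : ℝ) * ((ν : ℝ) - 1))) ^ (ν - 1) *
              Real.exp (-Real.sqrt ((ν : ℝ) * ((ν : ℝ) - 1))) / (Nat.factorial (ν - 1))) /
          (Ωs ν * lowerGamma ((ν : ℝ) - 1) (Ωs ν) / ((ν : ℝ) - 1) -
            (ν : ℝ) * lowerGamma ((ν : ℝ) + 1) (Ωs ν) / Ωs ν + (ν : ℝ) / Ωs ν - 1))
      Filter.atTop (nhds 1) := by
  refine (stmt13_general tendsto_natCast_atTop_atTop ((eventually_ge_atTop 2).mono hΩs)).congr' ?_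
  filter_upwards [eventually_ge_atTop 1] with ν hν using by rw [supRisk_natCast hν]; rfl
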